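/- Let σ₁ ≥ σ₂ ≥ ⋯ ≥ σ_n ≥ 0 with σ_r > 0 for some 1 ≤ r < n, let Σ_r = diag(σ₁,…,σ_r) ∈ ℝ^{r×r} and Σ₀ = diag(σ_{r+1},…,σ_n) ∈ ℝ^{(n−r)×(n−r)}, and set α = σ_{r+1}/σ_r. Then for every integer τ ≥ 0 and every matrix M ∈ ℂ^{(n−r)×r}, the matrix S = Σ₀^{2τ+1} M Σ_r^{−(2τ+1)} satisfies ‖S Σ_r‖_F ≤ α^{2τ} ‖Σ₀ M‖_F, where ‖·‖_F denotes the Frobenius norm. -/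

import Mathlib

/-!
Both sides are Frobenius norms, so it suffices to compare the matrices entry by entry. Multiplying
by diagonal matrices rescales entries: the `(k, i)` entry of `S Σ_r` is
`(σ_{r+k} / σ_i)^{2τ}` times the `(k, i)` entry `σ_{r+k} M_{k i}` of `Σ₀ M`. As `σ` is decreasing,
every such ratio is at most the ratio `α = σ_{r+1} / σ_r` across the spectral gap.
-/

open Matrix

/-- The Frobenius norm of a complex matrix. -/
noncomputable def frobNorm {α β : Type*} [Fintype α] [Fintype β] (M : Matrix α β ℂ) : ℝ :=
  Real.sqrt (∑ i, ∑ j, ‖M i j‖ ^ 2)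

/-- An entrywise bound with a uniform factor gives the same bound for the Frobenius norms. -/
lemma frobNorm_le_mul_of_entrywise {α β : Type*} [Fintype α] [Fintype β] {A B : Matrix α β ℂ}
    {c : ℝ} (hc : 0 ≤ c) (h : ∀ i j, ‖A i j‖ ≤ c * ‖B i j‖) :
    frobNorm A ≤ c * frobNorm B := by
  unfold frobNorm
  rw [Real.sqrt_le_iff]
  refine ⟨by positivity, ?_⟩
  rw [mul_pow, Real.sq_sqrt (by positivity), Finset.mul_sum]
  refine Finset.sum_le_sum fun i _ => ?_
  rw [Finset.mul_sum]
  refine Finset.sum_le_sum fun j _ => ?_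
  rw [← mul_pow]
  exact pow_le_pow_left₀ (norm_nonneg _) (h i j) 2

/-- `Matrix.inv_diagonal` gives the inverse through `Ring.inverse`; over a field, with nonzero
diagonal entries, it is the entrywise inverse. -/
lemma inv_diagonal_of_ne_zero {β : Type*} [Fintype β] [DecidableEq β] {b : β → ℂ}
    (hb : ∀ j, b j ≠ 0) : (diagonal b)⁻¹ = diagonal fun j => (b j)⁻¹ := by
  apply Matrix.inv_eq_right_inv
  simp [hb]

lemma diagonal_pow_mul_mul_inv_pow_mul_apply {α β : Type*} [Fintype α] [Fintype β]
    [DecidableEq α] [DecidableEq β] (a : α → ℂ) {b : β → ℂ} (hb : ∀ j, b j ≠ 0)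
    (m : ℕ) (M : Matrix α β ℂ) (i : α) (j : β) :
    (diagonal a ^ (m + 1) * M * (diagonal b)⁻¹ ^ (m + 1) * diagonal b) i j =
      (a i / b j) ^ m * (diagonal a * M) i j := by
  have := hb j
  rw [inv_diagonal_of_ne_zero hb, diagonal_pow, diagonal_pow, mul_diagonal, mul_diagonal,
    diagonal_mul, diagonal_mul]
  simp only [Pi.pow_apply, inv_pow, div_pow]
  field_simp
  ring


/-- With `Σ_r = diag(σ₁,…,σ_r)`, `Σ₀ = diag(σ_{r+1},…,σ_n)` and `α = σ_{r+1}/σ_r`, the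
matrix `S = Σ₀^{2τ+1} M Σ_r^{−(2τ+1)}` satisfies `‖S Σ_r‖_F ≤ α^{2τ} ‖Σ₀ M‖_F`. -/
theorem power_iteration_contraction {n : ℕ} (σ : Fin n → ℝ)
    (hanti : Antitone σ) (hnonneg : ∀ i, 0 ≤ σ i)
    (r : ℕ) (hr1 : 1 ≤ r) (hrn : r < n) (hσr : 0 < σ ⟨r - 1, by omega⟩)
    (τ : ℕ) (M : Matrix (Fin (n - r)) (Fin r) ℂ) :
    frobNorm
        ((Matrix.diagonal fun k : Fin (n - r) =>
            ((σ ⟨r + (k : ℕ), by have := k.isLt; omega⟩ : ℝ) : ℂ)) ^ (2 * τ + 1) *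
          M *
          ((Matrix.diagonal fun i : Fin r => ((σ (Fin.castLE hrn.le i) : ℝ) : ℂ))⁻¹) ^
            (2 * τ + 1) *
          Matrix.diagonal fun i : Fin r => ((σ (Fin.castLE hrn.le i) : ℝ) : ℂ))
      ≤ (σ ⟨r, hrn⟩ / σ ⟨r - 1, by omega⟩) ^ (2 * τ) *
          frobNorm
            ((Matrix.diagonal fun k : Fin (n - r) =>
                ((σ ⟨r + (k : ℕ), by have := k.isLt; omega⟩ : ℝ) : ℂ)) * M) := by
  have hpos : ∀ i : Fin r, 0 < σ (Fin.castLE hrn.le i) := fun i =>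
    hσr.trans_le (hanti (Fin.le_def.2 (Nat.le_sub_one_of_lt i.isLt)))
  have hα : 0 ≤ σ ⟨r, hrn⟩ / σ ⟨r - 1, by omega⟩ := div_nonneg (hnonneg _) hσr.le
  refine frobNorm_le_mul_of_entrywise (pow_nonneg hα _) fun k i => ?_
  rw [diagonal_pow_mul_mul_inv_pow_mul_apply _
    (fun j => Complex.ofReal_ne_zero.2 (hpos j).ne'), norm_mul, norm_pow, norm_div,
    Complex.norm_of_nonneg (hnonneg _), Complex.norm_of_nonneg (hnonneg _)]
  refine mul_le_mul_of_nonneg_right (pow_le_pow_left₀ (div_nonneg (hnonneg _) (hnonneg _)) ?_ _)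
    (norm_nonneg _)
  exact div_le_div₀ (hnonneg _) (hanti (Fin.le_def.2 (Nat.le_add_right _ _))) hσr
    (hanti (Fin.le_def.2 (Nat.le_sub_one_of_lt i.isLt)))
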